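/- arXiv:2206.09908 — 8 statements merged into one kernel-verified Lean document; each statement's English description precedes it below -/
import Mathlib

section
/- Finite-time unbiasedness of the NEIS estimator (Proposition 2.1, finite-time case). Let U0, U1 : ℝ^d → ℝ be continuous with ∫_{ℝ^d} exp(−U0(x)) dx = 1 and Z1 := ∫_{ℝ^d} exp(−U1(x)) dx < ∞. Let b be an admissible vector field with global flow X and Jacobian factor J, and assume in addition that for every t ∈ ℝ the map x ↦ X t x is continuously differentiable and satisfies det(D_x(X t ·)(x)) = J t x for all x. Then for all real numbers t− < t+ one has Z1 = ∫_{ℝ^d} exp(−U0(x)) · A_{t−,t+}(x) dx, where A_{t−,t+}(x) := ∫_{t−}^{t+} [ exp(−U1(X t x)) · J t x / ( ∫_{t−t+}^{t−t−} exp(−U0(X s x)) · J s x ds ) ] dt. -/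
/-!
Write `ρᵢ = exp (-Uᵢ)` and `M y = ∫ s in -tp..-tm, ρ₀ (X s y) * J s y`. The cocycle identity
`J (s + t) x = J t x * J s (X t x)` (`Jac_add`) shows that the denominator in the estimator equals
`J t x * M (X t x)` (`denom_eq`), so the Jacobian factors cancel and the estimator is
`∫ t in tm..tp, h (X t x)` with `h = ρ₁ / M`.

For each fixed `t`, the substitution `x = X (-t) y` turns `∫ ρ₀ x * h (X t x) dx` into
`∫ ρ₀ (X (-t) y) * J (-t) y * h y dy` (`integral_change`). Exchanging the order of integration, the
`t`-integral of `ρ₀ (X (-t) y) * J (-t) y` over `[tm, tp]` is exactly `M y`, which cancels against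
the denominator of `h` and leaves `∫ ρ₁`. Fubini is justified because everything is nonnegative and
the last iterated integral is finite; joint measurability comes from continuity in `t` for fixed `x`
and in `x` for fixed `t`.
-/

open MeasureTheory Filter

noncomputable section

/-- Euclidean state space ℝ^d. -/
abbrev Euc (d : ℕ) := EuclideanSpace ℝ (Fin d)

/-- Divergence of a vector field: trace of the Fréchet derivative. -/
def vdiv {d : ℕ} (b : Euc d → Euc d) (x : Euc d) : ℝ :=
  LinearMap.trace ℝ (Euc d) (fderiv ℝ b x).toLinearMap

/-- A vector field is admissible if it is C¹ with globally bounded derivative. -/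
def Admissible {d : ℕ} (b : Euc d → Euc d) : Prop :=
  ContDiff ℝ 1 b ∧ ∃ C : ℝ, ∀ x, ‖fderiv ℝ b x‖ ≤ C

/-- A global flow of the vector field `b`. -/
def IsGlobalFlow {d : ℕ} (b : Euc d → Euc d) (X : ℝ → Euc d → Euc d) : Prop :=
  (∀ x, X 0 x = x) ∧
  (∀ t s : ℝ, ∀ x, X (t + s) x = X t (X s x)) ∧
  (∀ x : Euc d, ∀ t : ℝ, HasDerivAt (fun τ => X τ x) (b (X t x)) t)

/-- Jacobian factor of the flow: J t x = exp(∫₀ᵗ div b(X s x) ds). -/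
def Jac {d : ℕ} (b : Euc d → Euc d) (X : ℝ → Euc d → Euc d) (t : ℝ) (x : Euc d) : ℝ :=
  Real.exp (∫ s in (0:ℝ)..t, vdiv b (X s x))

section Flow

variable {d : ℕ} {b : Euc d → Euc d} {X : ℝ → Euc d → Euc d}

lemma continuous_vdiv (hb : Admissible b) : Continuous (vdiv b) := by
  have h1 : Continuous (fderiv ℝ b) := hb.1.continuous_fderiv one_ne_zero
  have h2 : Continuous
      ((LinearMap.trace ℝ (Euc d)).comp (ContinuousLinearMap.coeLM ℝ :
        (Euc d →L[ℝ] Euc d) →ₗ[ℝ] (Euc d →ₗ[ℝ] Euc d))) :=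
    LinearMap.continuous_of_finiteDimensional _
  exact h2.comp h1

lemma continuous_flow_time (hX : IsGlobalFlow b X) (x : Euc d) : Continuous (fun t => X t x) :=
  continuous_iff_continuousAt.2 fun t => (hX.2.2 x t).continuousAt

lemma continuous_vdiv_flow (hb : Admissible b) (hX : IsGlobalFlow b X) (x : Euc d) :
    Continuous (fun t => vdiv b (X t x)) :=
  (continuous_vdiv hb).comp (continuous_flow_time hX x)

lemma continuous_Jac_time (hb : Admissible b) (hX : IsGlobalFlow b X) (x : Euc d) :
    Continuous (fun t => Jac b X t x) := by
  unfold Jac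
  exact Real.continuous_exp.comp (intervalIntegral.continuous_primitive
    (fun a c => (continuous_vdiv_flow hb hX x).intervalIntegrable a c) 0)

lemma Jac_pos (t : ℝ) (x : Euc d) : 0 < Jac b X t x := Real.exp_pos _

/-- Cocycle identity for the Jacobian factor. -/
lemma Jac_add (hb : Admissible b) (hX : IsGlobalFlow b X) (s t : ℝ) (x : Euc d) :
    Jac b X (s + t) x = Jac b X t x * Jac b X s (X t x) := by
  have hi := fun a c => (continuous_vdiv_flow hb hX x).intervalIntegrable (μ := volume) a c
  have h : (∫ r in (0:ℝ)..s, vdiv b (X r (X t x))) = ∫ r in t..(s + t), vdiv b (X r x) := by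
    have := intervalIntegral.integral_comp_add_right (a := 0) (b := s)
      (fun r => vdiv b (X r x)) t
    simpa [hX.2.1] using this
  unfold Jac
  rw [h, ← Real.exp_add, intervalIntegral.integral_add_adjacent_intervals (hi _ _) (hi _ _)]

/-- Continuity in the space variable follows from the determinant formula, as the flow is `C¹`. -/
lemma continuous_Jac_space (hdiff : ∀ t : ℝ, ContDiff ℝ 1 (fun x => X t x))
    (hdet : ∀ (t : ℝ) (x : Euc d), (fderiv ℝ (fun y => X t y) x).det = Jac b X t x) (t : ℝ) :
    Continuous (fun x => Jac b X t x) := by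
  have h : Continuous (fun x => (fderiv ℝ (fun y => X t y) x).det) :=
    ContinuousLinearMap.continuous_det.comp ((hdiff t).continuous_fderiv one_ne_zero)
  simpa only [hdet] using h

lemma measurable_flow (hX : IsGlobalFlow b X) (hdiff : ∀ t : ℝ, ContDiff ℝ 1 (fun x => X t x)) :
    Measurable (fun p : ℝ × Euc d => X p.1 p.2) := by
  exact measurable_uncurry_of_continuous_of_measurable (u := fun (t : ℝ) (x : Euc d) => X t x)
    (fun x => continuous_flow_time hX x) (fun t => (hdiff t).continuous.measurable)

lemma measurable_Jac (hb : Admissible b) (hX : IsGlobalFlow b X)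
    (hdiff : ∀ t : ℝ, ContDiff ℝ 1 (fun x => X t x))
    (hdet : ∀ (t : ℝ) (x : Euc d), (fderiv ℝ (fun y => X t y) x).det = Jac b X t x) :
    Measurable (fun p : ℝ × Euc d => Jac b X p.1 p.2) :=
  measurable_uncurry_of_continuous_of_measurable (u := fun (t : ℝ) (x : Euc d) => Jac b X t x)
    (fun x => continuous_Jac_time hb hX x)
    (fun t => (continuous_Jac_space hdiff hdet t).measurable)

lemma flow_neg_cancel (hX : IsGlobalFlow b X) (t : ℝ) (x : Euc d) : X t (X (-t) x) = x := by
  rw [← hX.2.1, add_neg_cancel, hX.1]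

lemma flow_injective (hX : IsGlobalFlow b X) (t : ℝ) : Function.Injective (fun x => X t x) := by
  intro x y h
  have h' : X (-t) (X t x) = X (-t) (X t y) := congrArg _ h
  simpa [← hX.2.1, hX.1] using h'

lemma flow_range (hX : IsGlobalFlow b X) (t : ℝ) : (fun x => X t x) '' Set.univ = Set.univ := by
  rw [Set.image_univ, Set.range_eq_univ]
  exact fun x => ⟨X (-t) x, flow_neg_cancel hX t x⟩

lemma integral_change (hX : IsGlobalFlow b X) (hdiff : ∀ t : ℝ, ContDiff ℝ 1 (fun x => X t x))
    (hdet : ∀ (t : ℝ) (x : Euc d), (fderiv ℝ (fun y => X t y) x).det = Jac b X t x)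
    (t : ℝ) (f : Euc d → ℝ) :
    ∫ x, f x = ∫ y, Jac b X t y * f (X t y) := by
  have h := integral_image_eq_integral_abs_det_fderiv_smul volume MeasurableSet.univ
    (fun x _ => ((hdiff t).differentiable one_ne_zero x).hasFDerivAt.hasFDerivWithinAt)
    (flow_injective hX t).injOn f
  rw [flow_range hX t] at h
  simpa [hdet, abs_of_pos (Jac_pos _ _)] using h

lemma integrable_change (hX : IsGlobalFlow b X) (hdiff : ∀ t : ℝ, ContDiff ℝ 1 (fun x => X t x))
    (hdet : ∀ (t : ℝ) (x : Euc d), (fderiv ℝ (fun y => X t y) x).det = Jac b X t x)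
    (t : ℝ) (f : Euc d → ℝ) :
    Integrable f ↔ Integrable (fun y => Jac b X t y * f (X t y)) := by
  have h := integrableOn_image_iff_integrableOn_abs_det_fderiv_smul volume MeasurableSet.univ
    (fun x _ => ((hdiff t).differentiable one_ne_zero x).hasFDerivAt.hasFDerivWithinAt)
    (flow_injective hX t).injOn f
  rw [flow_range hX t] at h
  simpa [hdet, abs_of_pos (Jac_pos _ _)] using h

/-- The denominator of the estimator, transported to the base point `X t x`. -/
lemma denom_eq (hb : Admissible b) (hX : IsGlobalFlow b X) (U0 : Euc d → ℝ) (tm tp t : ℝ)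
    (x : Euc d) :
    (∫ s in (t - tp)..(t - tm), Real.exp (-(U0 (X s x))) * Jac b X s x) =
      Jac b X t x *
        ∫ s in (-tp)..(-tm), Real.exp (-(U0 (X s (X t x)))) * Jac b X s (X t x) := by
  have h := intervalIntegral.integral_comp_add_right (a := -tp) (b := -tm)
    (fun s => Real.exp (-(U0 (X s x))) * Jac b X s x) t
  rw [show t - tp = -tp + t by ring, show t - tm = -tm + t by ring, ← h,
    ← intervalIntegral.integral_const_mul]
  refine intervalIntegral.integral_congr fun s _ => ?_
  simp only [Jac_add hb hX, hX.2.1]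
  ring

end Flow

/-- Finite-time unbiasedness of the NEIS estimator (Proposition 2.1, finite-time case). -/
theorem stmt_0 {d : ℕ} (hd : 0 < d)
    (U0 U1 : Euc d → ℝ) (hU0c : Continuous U0) (hU1c : Continuous U1)
    (hnorm : (∫ x : Euc d, Real.exp (-(U0 x))) = 1)
    (hZ1 : Integrable (fun x : Euc d => Real.exp (-(U1 x))))
    (b : Euc d → Euc d) (hb : Admissible b)
    (X : ℝ → Euc d → Euc d) (hX : IsGlobalFlow b X)
    (hdiff : ∀ t : ℝ, ContDiff ℝ 1 (fun x => X t x))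
    (hdet : ∀ (t : ℝ) (x : Euc d), (fderiv ℝ (fun y => X t y) x).det = Jac b X t x)
    (tm tp : ℝ) (htmtp : tm < tp) :
    (∫ x : Euc d, Real.exp (-(U1 x))) =
      ∫ x : Euc d, Real.exp (-(U0 x)) *
        (∫ t in tm..tp, Real.exp (-(U1 (X t x))) * Jac b X t x /
          (∫ s in (t - tp)..(t - tm), Real.exp (-(U0 (X s x))) * Jac b X s x)) := by
  set w : ℝ → Euc d → ℝ := fun s x => Real.exp (-(U0 (X s x))) * Jac b X s x with hw
  set M : Euc d → ℝ := fun y => ∫ s in (-tp)..(-tm), w s y with hM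
  set h : Euc d → ℝ := fun y => Real.exp (-(U1 y)) / M y with hh
  set ν : Measure ℝ := volume.restrict (Set.Ioc tm tp) with hν
  have hwc : ∀ x, Continuous (fun s => w s x) := fun x =>
    (Real.continuous_exp.comp (hU0c.comp (continuous_flow_time hX x)).neg).mul
      (continuous_Jac_time hb hX x)
  have hw0 : ∀ s x, 0 < w s x := fun s x => mul_pos (Real.exp_pos _) (Jac_pos s x)
  have hwm : Measurable (fun p : ℝ × Euc d => w p.1 p.2) :=
    (Real.measurable_exp.comp (hU0c.measurable.comp (measurable_flow hX hdiff)).neg).mul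
      (measurable_Jac hb hX hdiff hdet)
  have hM0 : ∀ y, 0 < M y := fun y =>
    intervalIntegral.intervalIntegral_pos_of_pos_on ((hwc y).intervalIntegrable _ _)
      (fun s _ => hw0 s y) (by linarith)
  have hMm : Measurable M := by
    simp only [hM, intervalIntegral.integral_of_le (neg_le_neg htmtp.le)]
    exact (hwm.stronglyMeasurable.integral_prod_left
      (μ := volume.restrict (Set.Ioc (-tp) (-tm)))).measurable
  have hhm : Measurable h := (Real.measurable_exp.comp hU1c.measurable.neg).div hMm
  have hh0 : ∀ y, 0 ≤ h y := fun y => div_nonneg (Real.exp_pos _).le (hM0 y).le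
  -- the joint integrands before and after the substitution `x = X (-t) y`
  set F : ℝ → Euc d → ℝ := fun t x => Real.exp (-(U0 x)) * h (X t x) with hF
  set G : ℝ → Euc d → ℝ := fun t y => w (-t) y * h y with hG
  have hFm : Measurable (fun p : ℝ × Euc d => F p.1 p.2) :=
    (Real.measurable_exp.comp (hU0c.measurable.comp measurable_snd).neg).mul
      (hhm.comp (measurable_flow hX hdiff))
  have hGm : Measurable (fun p : ℝ × Euc d => G p.1 p.2) :=
    (hwm.comp (measurable_fst.neg.prodMk measurable_snd)).mul (hhm.comp measurable_snd)
  have hF0 : ∀ t x, 0 ≤ F t x := fun t x => mul_nonneg (Real.exp_pos _).le (hh0 _)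
  have hG0 : ∀ t x, 0 ≤ G t x := fun t x => mul_nonneg (hw0 _ _).le (hh0 _)
  have hFG : ∀ t y, Jac b X (-t) y * F t (X (-t) y) = G t y := by
    intro t y
    simp only [hF, hG, hw, flow_neg_cancel hX]
    ring
  have hFGint : ∀ t, ∫ x, F t x = ∫ y, G t y := fun t => by
    rw [integral_change hX hdiff hdet (-t) (F t)]
    simp only [hFG]
  have hFGi : ∀ t, Integrable (F t) ↔ Integrable (G t) := fun t => by
    rw [integrable_change hX hdiff hdet (-t) (F t)]
    simp only [hFG]
  have hGt : ∀ y, ∫ t, G t y ∂ν = Real.exp (-(U1 y)) := by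
    intro y
    have h1 : ∫ t in tm..tp, w (-t) y = M y :=
      intervalIntegral.integral_comp_neg (a := tm) (b := tp) (fun s => w s y)
    rw [hν, ← intervalIntegral.integral_of_le htmtp.le]
    simp only [hG]
    rw [intervalIntegral.integral_mul_const, h1]
    exact mul_div_cancel₀ _ (hM0 y).ne'
  have hGI : Integrable (fun p : ℝ × Euc d => G p.1 p.2) (ν.prod volume) := by
    refine (integrable_prod_iff' hGm.aestronglyMeasurable).2 ⟨ae_of_all _ fun y => ?_, ?_⟩
    · have hc : Continuous (fun t => G t y) := ((hwc y).comp continuous_neg).mul continuous_const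
      exact (hc.integrableOn_Ioc : IntegrableOn _ _ volume)
    · simpa only [Real.norm_of_nonneg (hG0 _ _), hGt] using hZ1
  have hFI : Integrable (fun p : ℝ × Euc d => F p.1 p.2) (ν.prod volume) := by
    have hG' := (integrable_prod_iff hGm.aestronglyMeasurable).1 hGI
    refine (integrable_prod_iff hFm.aestronglyMeasurable).2 ⟨?_, ?_⟩
    · filter_upwards [hG'.1] with t ht using (hFGi t).2 ht
    · have := hG'.2
      simp only [Real.norm_of_nonneg (hG0 _ _)] at this
      simpa only [Real.norm_of_nonneg (hF0 _ _), hFGint] using this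
  have hest : ∀ x, Real.exp (-(U0 x)) *
      (∫ t in tm..tp, Real.exp (-(U1 (X t x))) * Jac b X t x /
        (∫ s in (t - tp)..(t - tm), w s x)) = ∫ t, F t x ∂ν := by
    intro x
    rw [hν, ← intervalIntegral.integral_of_le htmtp.le, ← intervalIntegral.integral_const_mul]
    refine intervalIntegral.integral_congr fun t _ => ?_
    have hJ := (Jac_pos (b := b) (X := X) t x).ne'
    have hMt := (hM0 (X t x)).ne'
    have hden : (∫ s in (t - tp)..(t - tm), w s x) = Jac b X t x * M (X t x) :=
      denom_eq hb hX U0 tm tp t x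
    simp only [hden, hF, hh]
    field_simp
  calc ∫ x, Real.exp (-(U1 x)) = ∫ y, ∫ t, G t y ∂ν := by simp only [hGt]
    _ = ∫ t, (∫ y, G t y) ∂ν := (integral_integral_swap hGI).symm
    _ = ∫ t, (∫ x, F t x) ∂ν := by simp only [hFGint]
    _ = ∫ x, ∫ t, F t x ∂ν := integral_integral_swap hFI
    _ = _ := integral_congr_ae (ae_of_all _ fun x => (hest x).symm)
end
end

section
/- Zero-variance property of gradient flows solving the Poisson equation (core of Proposition 3.1). Let V : ℝ^d → ℝ be twice continuously differentiable, let b := ∇V be its gradient field, and let ρ0, ρ1 : ℝ^d → ℝ be continuous nonnegative functions such that div b(y) = ρ1(y) − ρ0(y) for all y (i.e. ΔV = ρ1 − ρ0). Let X be a global flow of b with Jacobian factor J. Fix x ∈ ℝ^d and assume: (a) for k = 0, 1 the function t ↦ ρ_k(X t x) · J t x is Lebesgue integrable on ℝ; (b) J t x → 0 as t → +∞ and as t → −∞. Then ∫_ℝ ρ1(X t x) · J t x dt = ∫_ℝ ρ0(X t x) · J t x dt. Consequently, if moreover ρ0 = exp(−U0) with ∫_{ℝ^d} exp(−U0) = 1,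 ρ1 = exp(−U1)/Z1 with Z1 := ∫_{ℝ^d} exp(−U1) ∈ (0,∞), and ∫_ℝ ρ0(X t x) · J t x dt > 0, then the estimator value A(x) := (∫_ℝ exp(−U1(X t x)) J t x dt)/(∫_ℝ exp(−U0(X t x)) J t x dt) equals Z1. -/
/-!
Along a trajectory the Jacobian factor satisfies `J' = div b(X) J`, and the Poisson equation turns
the right-hand side into `ρ1(X) J - ρ0(X) J`. This derivative is integrable and `J` vanishes at
both ends of the time line, so the fundamental theorem of calculus on `ℝ` gives equality of the
two integrals. The estimator identity follows by pulling the constant `Z1` out of the numerator.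
-/

open MeasureTheory Filter

noncomputable section

/-- Zero-variance property of gradient flows solving the Poisson equation
(core of Proposition 3.1). -/
theorem stmt_6 {d : ℕ} (hd : 0 < d)
    (V : Euc d → ℝ) (hV : ContDiff ℝ 2 V)
    (ρ0 ρ1 : Euc d → ℝ) (hρ0c : Continuous ρ0) (hρ1c : Continuous ρ1)
    (hρ0n : ∀ y, 0 ≤ ρ0 y) (hρ1n : ∀ y, 0 ≤ ρ1 y)
    (hpoisson : ∀ y, vdiv (fun z => gradient V z) y = ρ1 y - ρ0 y)
    (X : ℝ → Euc d → Euc d) (hX : IsGlobalFlow (fun z => gradient V z) X)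
    (x : Euc d)
    (hint : ∀ ρ : Euc d → ℝ, (ρ = ρ0 ∨ ρ = ρ1) →
      Integrable (fun t : ℝ => ρ (X t x) * Jac (fun z => gradient V z) X t x))
    (hJtop : Tendsto (fun t : ℝ => Jac (fun z => gradient V z) X t x) atTop (nhds 0))
    (hJbot : Tendsto (fun t : ℝ => Jac (fun z => gradient V z) X t x) atBot (nhds 0)) :
    (∫ t : ℝ, ρ1 (X t x) * Jac (fun z => gradient V z) X t x) =
      (∫ t : ℝ, ρ0 (X t x) * Jac (fun z => gradient V z) X t x) ∧
    ∀ U0 U1 : Euc d → ℝ,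
      ρ0 = (fun y => Real.exp (-(U0 y))) →
      (∫ y : Euc d, Real.exp (-(U0 y))) = 1 →
      Integrable (fun y : Euc d => Real.exp (-(U1 y))) →
      0 < (∫ y : Euc d, Real.exp (-(U1 y))) →
      ρ1 = (fun y => Real.exp (-(U1 y)) / ∫ z : Euc d, Real.exp (-(U1 z))) →
      0 < (∫ t : ℝ, ρ0 (X t x) * Jac (fun z => gradient V z) X t x) →
      (∫ t : ℝ, Real.exp (-(U1 (X t x))) * Jac (fun z => gradient V z) X t x) /
          (∫ t : ℝ, Real.exp (-(U0 (X t x))) * Jac (fun z => gradient V z) X t x) =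
        ∫ y : Euc d, Real.exp (-(U1 y)) := by
  obtain ⟨-, -, hflow⟩ := hX
  have hXc : Continuous fun t => X t x :=
    continuous_iff_continuousAt.2 fun t => (hflow x t).continuousAt
  -- Along the trajectory the divergence is continuous, being `ρ1 - ρ0`, so `J' = (ρ1 - ρ0) J`.
  have hdivc : Continuous fun s => vdiv (fun z => gradient V z) (X s x) := by
    simp only [hpoisson]
    exact (hρ1c.comp hXc).sub (hρ0c.comp hXc)
  have hderiv : ∀ t, HasDerivAt (fun t => Jac (fun z => gradient V z) X t x)
      (ρ1 (X t x) * Jac (fun z => gradient V z) X t x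
        - ρ0 (X t x) * Jac (fun z => gradient V z) X t x) t := by
    intro t
    have h := (hdivc.integral_hasStrictDerivAt 0 t).hasDerivAt.exp
    rw [hpoisson] at h
    exact h.congr_deriv (by unfold Jac; ring)
  have h0 := hint ρ0 (Or.inl rfl)
  have h1 := hint ρ1 (Or.inr rfl)
  have key : (∫ t : ℝ, ρ1 (X t x) * Jac (fun z => gradient V z) X t x) =
      ∫ t : ℝ, ρ0 (X t x) * Jac (fun z => gradient V z) X t x := by
    have h := integral_of_hasDerivAt_of_tendsto hderiv (h1.sub h0) hJbot hJtop
    rw [integral_sub h1 h0, sub_zero] at h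
    exact sub_eq_zero.1 h
  refine ⟨key, ?_⟩
  intro U0 U1 hU0 _ _ hZ hU1 hpos
  set Z := ∫ y : Euc d, Real.exp (-(U1 y))
  -- The numerator is `Z` times the `ρ1`-integral, which equals the `ρ0`-integral.
  have hnum : (∫ t : ℝ, Real.exp (-(U1 (X t x))) * Jac (fun z => gradient V z) X t x) =
      Z * ∫ t : ℝ, ρ0 (X t x) * Jac (fun z => gradient V z) X t x := by
    rw [← key, ← integral_const_mul]
    congr 1
    funext t
    rw [hU1]
    field_simp
  have hden : (∫ t : ℝ, Real.exp (-(U0 (X t x))) * Jac (fun z => gradient V z) X t x) =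
      ∫ t : ℝ, ρ0 (X t x) * Jac (fun z => gradient V z) X t x := by
    rw [hU0]
  rw [hnum, hden, mul_div_cancel_right₀ _ hpos.ne']
end
end

section
/- Decay of the velocity along gradient flowlines (Lemma D.1). Let V : ℝ^d → ℝ be twice continuously differentiable, bounded, and with sup_x ‖D²V(x)‖ < ∞ (operator norm of the second derivative). Let X be a global flow of the gradient field ∇V. Then for every x ∈ ℝ^d, ‖∇V(X t x)‖ → 0 as t → +∞ and ‖∇V(X t x)‖ → 0 as t → −∞. -/
/-!
Along a flowline put `g t = V (X t x)` and `h t = ‖∇V (X t x)‖²`. Then `g' = h ≥ 0`, and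
`h' = 2 ⟪∇V, D²V ∇V⟫` satisfies `|h'| ≤ 2 C h`. Hence both `g` and `2 C g - h` are nondecreasing and
bounded above, so both converge at `+∞`, and therefore so does `h`. Since `g (t + 1) - g t → 0` and
this difference equals `h` at an intermediate time, the limit of `h` is `0`. The limit at `-∞`
follows by applying the same one-dimensional lemma to `t ↦ -g (-t)` and `t ↦ h (-t)`.
-/

open MeasureTheory Filter

noncomputable section

/-- One-dimensional core: a function bounded above whose nonnegative derivative `h` satisfies the
one-sided bound `h' ≤ K h` has `h → 0` at `+∞`. -/
lemma tendsto_zero_of_deriv_le {g h k : ℝ → ℝ} {K M : ℝ} (hK : 0 ≤ K)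
    (hg : ∀ t, HasDerivAt g (h t) t) (hh : ∀ t, HasDerivAt h (k t) t)
    (h0 : ∀ t, 0 ≤ h t) (hk : ∀ t, k t ≤ K * h t) (hM : ∀ t, g t ≤ M) :
    Tendsto h atTop (nhds 0) := by
  have mono_g : Monotone g := monotone_of_hasDerivAt_nonneg hg h0
  have mono_psi : Monotone (fun t => K * g t - h t) :=
    monotone_of_hasDerivAt_nonneg (fun t => ((hg t).const_mul K).sub (hh t))
      (fun t => sub_nonneg.2 (hk t))
  have lim_g := tendsto_atTop_ciSup mono_g ⟨M, by rintro _ ⟨t, rfl⟩; exact hM t⟩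
  have lim_psi := tendsto_atTop_ciSup mono_psi ⟨K * M, by
    rintro _ ⟨t, rfl⟩
    have := mul_le_mul_of_nonneg_left (hM t) hK
    have := h0 t
    dsimp only
    linarith⟩
  generalize (⨆ i, g i) = a at lim_g
  generalize (⨆ i, (K * g i - h i)) = b at lim_psi
  have lim_h : Tendsto h atTop (nhds (K * a - b)) := by
    refine ((lim_g.const_mul K).sub lim_psi).congr fun t => ?_
    ring
  have mvt : ∀ t, ∃ c, t < c ∧ h c = g (t + 1) - g t := fun t => by
    obtain ⟨c, hc, e⟩ := exists_hasDerivAt_eq_slope g h (lt_add_one t)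
      (fun s _ => (hg s).continuousAt.continuousWithinAt) (fun s _ => hg s)
    exact ⟨c, hc.1, by simpa using e⟩
  choose c hc e using mvt
  have lim_c : Tendsto c atTop atTop := tendsto_atTop_mono (fun t => (hc t).le) tendsto_id
  have lim_diff : Tendsto (fun t => g (t + 1) - g t) atTop (nhds (a - a)) :=
    (lim_g.comp (tendsto_atTop_add_const_right _ 1 tendsto_id)).sub lim_g
  have lim_eq : K * a - b = a - a :=
    tendsto_nhds_unique ((lim_h.comp lim_c).congr e) lim_diff
  rwa [lim_eq, sub_self] at lim_h

/-- Decay of the velocity along gradient flowlines (Lemma D.1). -/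
theorem stmt_7 {d : ℕ} (hd : 0 < d)
    (V : Euc d → ℝ) (hV : ContDiff ℝ 2 V)
    (hVbdd : ∃ M : ℝ, ∀ x, |V x| ≤ M)
    (hHess : ∃ C : ℝ, ∀ x, ‖fderiv ℝ (fun y => gradient V y) x‖ ≤ C)
    (X : ℝ → Euc d → Euc d) (hX : IsGlobalFlow (fun y => gradient V y) X) :
    ∀ x : Euc d,
      Tendsto (fun t : ℝ => ‖gradient V (X t x)‖) atTop (nhds 0) ∧
      Tendsto (fun t : ℝ => ‖gradient V (X t x)‖) atBot (nhds 0) := by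
  intro x
  obtain ⟨M, hM⟩ := hVbdd
  obtain ⟨C, hC⟩ := hHess
  obtain ⟨-, -, hflow⟩ := hX
  have hC0 : 0 ≤ C := (norm_nonneg _).trans (hC 0)
  have hdiff : Differentiable ℝ (fun y => gradient V y) := by
    have h1 : ContDiff ℝ 1 (fderiv ℝ V) := hV.fderiv_right (by norm_num)
    exact ((InnerProductSpace.toDual ℝ (Euc d)).symm.toContinuousLinearEquiv.differentiable).comp
      (h1.differentiable (by norm_num))
  have hg : ∀ t, HasDerivAt (fun τ => V (X τ x)) (‖gradient V (X t x)‖ ^ 2) t := fun t => by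
    have h1 := ((hV.differentiable (by norm_num)) (X t x)).hasGradientAt.hasFDerivAt
    have h2 := h1.comp_hasDerivAt t (hflow x t)
    rw [InnerProductSpace.toDual_apply_apply, real_inner_self_eq_norm_sq] at h2
    exact h2
  have hv : ∀ t, HasDerivAt (fun τ => gradient V (X τ x))
      (fderiv ℝ (fun y => gradient V y) (X t x) (gradient V (X t x))) t := fun t => by
    have h1 := (hdiff (X t x)).hasFDerivAt
    exact h1.comp_hasDerivAt t (hflow x t)
  have hh := fun t => (hv t).norm_sq
  have hk : ∀ t, |2 * inner ℝ (gradient V (X t x))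
      (fderiv ℝ (fun y => gradient V y) (X t x) (gradient V (X t x)))|
        ≤ 2 * C * ‖gradient V (X t x)‖ ^ 2 := fun t => by
    have h1 := abs_real_inner_le_norm (gradient V (X t x))
      (fderiv ℝ (fun y => gradient V y) (X t x) (gradient V (X t x)))
    have h2 := (fderiv ℝ (fun y => gradient V y) (X t x)).le_of_opNorm_le (hC (X t x))
      (gradient V (X t x))
    have h3 := mul_le_mul_of_nonneg_left h2 (norm_nonneg (gradient V (X t x)))
    rw [abs_mul, abs_two]
    nlinarith
  have of_sq : ∀ l : Filter ℝ, Tendsto (fun t => ‖gradient V (X t x)‖ ^ 2) l (nhds 0) →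
      Tendsto (fun t => ‖gradient V (X t x)‖) l (nhds 0) := fun l hl => by
    simpa [Real.sqrt_sq] using hl.sqrt
  refine ⟨of_sq _ ?_, of_sq _ ?_⟩
  · exact tendsto_zero_of_deriv_le (by positivity : 0 ≤ 2 * C) hg hh (fun t => by positivity)
      (fun t => (le_abs_self _).trans (hk t)) (fun t => (le_abs_self _).trans (hM _))
  · have hrev := tendsto_zero_of_deriv_le (by positivity : 0 ≤ 2 * C)
      (g := fun t => -V (X (-t) x)) (h := fun t => ‖gradient V (X (-t) x)‖ ^ 2)
      (k := fun t => -(2 * inner ℝ (gradient V (X (-t) x))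
        (fderiv ℝ (fun y => gradient V y) (X (-t) x) (gradient V (X (-t) x)))))
      (fun t => by
        have h1 := ((hg (-t)).comp t (hasDerivAt_neg t)).neg
        rw [mul_neg_one, neg_neg] at h1
        exact h1)
      (fun t => by
        have h1 := (hh (-t)).comp t (hasDerivAt_neg t)
        rw [mul_neg_one] at h1
        exact h1)
      (fun t => by positivity)
      (fun t => (neg_le_abs _).trans (hk (-t))) (fun t => (neg_le_abs _).trans (hM _))
    simpa [Function.comp_def] using hrev.comp tendsto_neg_atBot_atTop
end
end

section
/- Bounded sojourn time in nearly-constant-velocity regions (Lemma A.6). Let b : ℝ^d → ℝ^d be continuous with a global flow X. Let D ⊆ ℝ^d be a bounded set and suppose there exist x* ∈ D and ζ ∈ (0,1) such that ‖b(x*)‖ > 0 and ‖b(x) − b(x*)‖ < ζ·‖b(x*)‖ for all x ∈ D. Then for every x ∈ ℝ^d and all real numbers s ≤ t such that X r x ∈ D for every r ∈ [s, t], one has t − s ≤ diam(D) / ((1 − ζ)·‖b(x*)‖), where diam(D) denotes the metric diameter of D. -/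
/-!
While the trajectory stays in `D`, its velocity differs from the constant vector `b xs` by at most
`ζ * ‖b xs‖`. By the mean value inequality the displacement over `[s, t]` is within
`ζ * ‖b xs‖ * (t - s)` of `(t - s) • b xs`, hence has norm at least `(1 - ζ) * ‖b xs‖ * (t - s)`.
Both endpoints lie in `D`, so the displacement is also at most `Metric.diam D`.
-/

open MeasureTheory Filter

noncomputable section

/-- Bounded sojourn time in nearly-constant-velocity regions (Lemma A.6). -/
theorem stmt_10 {d : ℕ} (hd : 0 < d)
    (b : Euc d → Euc d) (hbc : Continuous b)
    (X : ℝ → Euc d → Euc d) (hX : IsGlobalFlow b X)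
    (D : Set (Euc d)) (hD : Bornology.IsBounded D)
    (xs : Euc d) (hxs : xs ∈ D) (ζ : ℝ) (hζ0 : 0 < ζ) (hζ1 : ζ < 1)
    (hbxs : 0 < ‖b xs‖) (hclose : ∀ x ∈ D, ‖b x - b xs‖ < ζ * ‖b xs‖) :
    ∀ x : Euc d, ∀ s t : ℝ, s ≤ t → (∀ r ∈ Set.Icc s t, X r x ∈ D) →
      t - s ≤ Metric.diam D / ((1 - ζ) * ‖b xs‖) := by
  intro x s t hst hr
  rw [le_div_iff₀ (mul_pos (sub_pos.2 hζ1) hbxs)]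
  -- The deviation from uniform motion, `r ↦ X r x - r • b xs`, has speed at most `ζ * ‖b xs‖`.
  have hdev : ∀ r ∈ Set.Icc s t, HasDerivWithinAt (fun τ => X τ x - τ • b xs)
      (b (X r x) - b xs) (Set.Icc s t) r := by
    intro r _
    have h := (hX.2.2 x r).sub ((hasDerivAt_id r).smul_const (b xs))
    rw [one_smul] at h
    exact h.hasDerivWithinAt
  have hmv := norm_image_sub_le_of_norm_deriv_le_segment' hdev
    (fun r hr' => (hclose _ (hr r (Set.Ico_subset_Icc_self hr'))).le)
    t (Set.right_mem_Icc.2 hst)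
  have hdiam : ‖X t x - X s x‖ ≤ Metric.diam D := by
    rw [← dist_eq_norm]
    exact Metric.dist_le_diam_of_mem hD (hr t (Set.right_mem_Icc.2 hst))
      (hr s (Set.left_mem_Icc.2 hst))
  have hsplit : (t - s) • b xs = (X t x - X s x)
      - ((X t x - t • b xs) - (X s x - s • b xs)) := by
    rw [sub_smul]; abel
  have htri := norm_sub_le (X t x - X s x) ((X t x - t • b xs) - (X s x - s • b xs))
  rw [← hsplit, norm_smul, Real.norm_of_nonneg (sub_nonneg.2 hst)] at htri
  linarith
end
end

section
/- Zero variance of the linear flow for one-dimensional Gaussians (Proposition E.8 in dimension one, via the explicit flow of Appendix F.2.1). Let σ ∈ (0,1), ω ∈ ℝ, and let x ∈ ℝ with x ≠ ω/(1−σ). Define X : ℝ → ℝ by X t := e^t · x − (e^t − 1) · ω/(1−σ), which is the flow of the vector field b(y) = y − ω/(1−σ) started at x, with Jacobian factor e^t. Then ∫_ℝ exp(−(X t − ω)²/(2σ²)) · e^t dt = σ · ∫_ℝ exp(−(X t)²/2) · e^t dt, both integrals being finite; i.e. the infinite-time NEIS estimator for target potential U1(y) = (y−ω)²/(2σ²)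 and normalized Gaussian base density (2π)^{−1/2} exp(−y²/2) equals Z1 = √(2π)·σ for every such x. -/
/-!
Put `c = ω / (1 - σ)`, so that `X t = c + e ^ t (x - c)`. Since `ω = (1 - σ) c`, the flow satisfies
`(X t - ω) / σ = c + (e ^ t / σ) (x - c) = X (t - log σ)`: the affine map carrying the target to the
standard Gaussian is a time shift along the flow. As `e ^ t = σ e ^ (t - log σ)`, the target integrand
is `σ` times the base integrand translated by `log σ`, and translation invariance of Lebesgue measure
gives the identity. Integrability of the base integrand is the change of variables `y = X t` for the
integrable function `exp (-y ^ 2 / 2)`; it is here that `x ≠ c` is needed.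
-/

open MeasureTheory

noncomputable section

/-- Change of variables `y = c + e ^ t a`, injective because `a ≠ 0`. -/
lemma integrable_gaussian_flow (a c : ℝ) (ha : a ≠ 0) :
    Integrable (fun t : ℝ => Real.exp (-((c + Real.exp t * a) ^ 2 / 2)) * Real.exp t) := by
  have hderiv : ∀ t ∈ (Set.univ : Set ℝ),
      HasDerivWithinAt (fun t : ℝ => c + Real.exp t * a) (Real.exp t * a) Set.univ t :=
    fun t _ => (((Real.hasDerivAt_exp t).mul_const a).const_add c).hasDerivWithinAt
  have hinj : Set.InjOn (fun t : ℝ => c + Real.exp t * a) Set.univ := by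
    intro s _ t _ hst
    exact Real.exp_injective (mul_right_cancel₀ ha (add_left_cancel hst))
  have hgauss : Integrable (fun y : ℝ => Real.exp (-(1 / 2) * y ^ 2)) :=
    integrable_exp_neg_mul_sq (by norm_num)
  have h := (integrableOn_image_iff_integrableOn_abs_deriv_smul MeasurableSet.univ hderiv hinj
    (fun y : ℝ => Real.exp (-(1 / 2) * y ^ 2))).1 hgauss.integrableOn
  rw [integrableOn_univ] at h
  convert h.const_mul |a|⁻¹ using 2 with t
  have ha' : |a| ≠ 0 := abs_ne_zero.2 ha
  rw [smul_eq_mul, abs_mul, Real.abs_exp]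
  field_simp

/-- Zero variance of the linear flow for one-dimensional Gaussians
(Proposition E.8 in dimension one, via the explicit flow of Appendix F.2.1). -/
theorem stmt_13 (σ ω x : ℝ) (hσ0 : 0 < σ) (hσ1 : σ < 1) (hx : x ≠ ω / (1 - σ))
    (X : ℝ → ℝ)
    (hX : ∀ t : ℝ, X t = Real.exp t * x - (Real.exp t - 1) * (ω / (1 - σ))) :
    Integrable (fun t : ℝ => Real.exp (-((X t - ω) ^ 2 / (2 * σ ^ 2))) * Real.exp t) ∧
    Integrable (fun t : ℝ => Real.exp (-((X t) ^ 2 / 2)) * Real.exp t) ∧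
    (∫ t : ℝ, Real.exp (-((X t - ω) ^ 2 / (2 * σ ^ 2))) * Real.exp t) =
      σ * ∫ t : ℝ, Real.exp (-((X t) ^ 2 / 2)) * Real.exp t ∧
    (∫ t : ℝ, Real.exp (-((X t - ω) ^ 2 / (2 * σ ^ 2))) * Real.exp t) /
        (∫ t : ℝ, Real.exp (-((X t) ^ 2 / 2 + Real.log (Real.sqrt (2 * Real.pi)))) *
          Real.exp t) =
      Real.sqrt (2 * Real.pi) * σ := by
  have h1σ : 1 - σ ≠ 0 := by linarith
  set c := ω / (1 - σ) with hc
  have hω : ω = (1 - σ) * c := by rw [hc]; field_simp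
  have hXc : ∀ t, X t = c + Real.exp t * (x - c) := fun t => by rw [hX t]; ring
  have hint : Integrable (fun t : ℝ => Real.exp (-((X t) ^ 2 / 2)) * Real.exp t) := by
    simp only [hXc]
    exact integrable_gaussian_flow (x - c) c (sub_ne_zero.2 hx)
  -- The target integrand is the base integrand, rescaled by `σ` and shifted in time by `log σ`.
  have hshift : ∀ t, Real.exp (-((X t - ω) ^ 2 / (2 * σ ^ 2))) * Real.exp t =
      σ * (Real.exp (-((X (t - Real.log σ)) ^ 2 / 2)) * Real.exp (t - Real.log σ)) := by
    intro t
    have hXs : X (t - Real.log σ) = (X t - ω) / σ := by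
      rw [hXc, hXc, Real.exp_sub, Real.exp_log hσ0, hω]
      field_simp
      ring
    rw [hXs, Real.exp_sub, Real.exp_log hσ0, div_pow, div_div, mul_comm (σ ^ 2) 2]
    field_simp
  have heq : (∫ t : ℝ, Real.exp (-((X t - ω) ^ 2 / (2 * σ ^ 2))) * Real.exp t) =
      σ * ∫ t : ℝ, Real.exp (-((X t) ^ 2 / 2)) * Real.exp t := by
    simp_rw [hshift]
    rw [integral_const_mul, integral_sub_right_eq_self
      (fun t : ℝ => Real.exp (-((X t) ^ 2 / 2)) * Real.exp t) (Real.log σ)]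
  refine ⟨?_, hint, heq, ?_⟩
  · simp_rw [hshift]
    exact (hint.comp_sub_right (Real.log σ)).const_mul σ
  · have hpos : 0 < ∫ t : ℝ, Real.exp (-((X t) ^ 2 / 2)) * Real.exp t := by
      simp_rw [← Real.exp_add] at hint ⊢
      exact integral_exp_pos hint
    have hs : 0 < Real.sqrt (2 * Real.pi) := Real.sqrt_pos.2 (by positivity)
    have hnorm : ∀ t, Real.exp (-((X t) ^ 2 / 2 + Real.log (Real.sqrt (2 * Real.pi)))) *
        Real.exp t =
        (Real.sqrt (2 * Real.pi))⁻¹ * (Real.exp (-((X t) ^ 2 / 2)) * Real.exp t) := by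
      intro t
      rw [neg_add, Real.exp_add, Real.exp_neg (Real.log _), Real.exp_log hs]
      ring
    rw [heq]
    simp_rw [hnorm]
    rw [integral_const_mul]
    have hne := hpos.ne'
    have hsne := hs.ne'
    generalize (∫ t : ℝ, Real.exp (-((X t) ^ 2 / 2)) * Real.exp t) = I at hne ⊢
    generalize Real.sqrt (2 * Real.pi) = r at hsne ⊢
    field_simp
end
end

section
/- Radial solution of the Poisson equation with Gaussian source (lemma preceding Proposition E.9). Let d ≥ 2 be an integer and let C ∈ ℝ and σ > 0. Define g : (0,∞) → ℝ by g(r) := C · 2^{d/2−1} · σ^d · r^{1−d} · ∫_0^{r²/(2σ²)} t^{d/2−1} e^{−t} dt (the integral is the lower incomplete gamma function γ(d/2, r²/(2σ²))). Then for every r > 0, g is differentiable at r and g′(r) + ((d−1)/r)·g(r) = C · exp(−r²/(2σ²)). Consequently, any f : (0,∞) → ℝ with f′ = g satisfies f″(r) + ((d−1)/r) f′(r) = C e^{−r²/(2σ²)}, i.e. V(x) := f(‖x−μ‖) solves ΔV = C e^{−‖x−μ‖²/(2σ²)} away from μ. -/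
/-!
With `u = r² / (2σ²)`, the product rule applied to `g(r) = K · r^(1-d) · γ(d/2, u)` gives two terms.
Differentiating the power yields `-((d-1)/r) · g(r)`; differentiating the incomplete gamma factor
(fundamental theorem of calculus and chain rule) yields
`K · r^(1-d) · u^(d/2-1) · (r/σ²) · e^(-u)`, whose prefactor is `C` by `radial_prefactor`. As `d ≥ 2`,
the integrand `t^(d/2-1) e^(-t)` is continuous on all of `ℝ`.
-/

open MeasureTheory

noncomputable section

/-- The powers of `2`, `σ` and `r` in front of the Gaussian cancel exactly. -/
lemma radial_prefactor (d : ℕ) (σ r : ℝ) (hσ : 0 < σ) (hr : 0 < r) :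
    (2 : ℝ) ^ ((d : ℝ) / 2 - 1) * σ ^ d * r ^ (1 - (d : ℝ)) *
      ((r ^ 2 / (2 * σ ^ 2)) ^ ((d : ℝ) / 2 - 1) * (r / σ ^ 2)) = 1 := by
  have hpow : ∀ x : ℝ, 0 < x → (x ^ 2) ^ ((d : ℝ) / 2 - 1) = x ^ d / x ^ 2 := by
    intro x hx
    rw [← Real.rpow_natCast x 2, ← Real.rpow_mul hx.le, ← Real.rpow_natCast x d,
      ← Real.rpow_sub hx]
    congr 1
    push_cast
    ring
  have h2 : (0 : ℝ) < (2 : ℝ) ^ ((d : ℝ) / 2 - 1) := by positivity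
  rw [Real.div_rpow (by positivity) (by positivity), Real.mul_rpow (by positivity) (by positivity),
    hpow r hr, hpow σ hσ, Real.rpow_sub hr, Real.rpow_one, Real.rpow_natCast]
  field_simp

/-- Radial solution of the Poisson equation with Gaussian source
(lemma preceding Proposition E.9): the derivative identity
g′(r) = C·exp(−r²/(2σ²)) − ((d−1)/r)·g(r) on (0,∞). -/
theorem stmt_15 (d : ℕ) (hd : 2 ≤ d) (C σ : ℝ) (hσ : 0 < σ)
    (g : ℝ → ℝ)
    (hg : ∀ r : ℝ, g r =
      C * (2 : ℝ) ^ ((d : ℝ) / 2 - 1) * σ ^ d * r ^ (1 - (d : ℝ)) *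
        ∫ t in (0:ℝ)..(r ^ 2 / (2 * σ ^ 2)), t ^ ((d : ℝ) / 2 - 1) * Real.exp (-t)) :
    ∀ r : ℝ, 0 < r →
      HasDerivAt g (C * Real.exp (-(r ^ 2 / (2 * σ ^ 2))) - ((d : ℝ) - 1) / r * g r) r := by
  intro r hr
  have hd' : (2 : ℝ) ≤ d := by exact_mod_cast hd
  have hcont : Continuous fun t : ℝ => t ^ ((d : ℝ) / 2 - 1) * Real.exp (-t) :=
    (Real.continuous_rpow_const (by linarith)).mul (by fun_prop)
  have hI := (hcont.integral_hasStrictDerivAt 0 (r ^ 2 / (2 * σ ^ 2))).hasDerivAt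
  have hu : HasDerivAt (fun r : ℝ => r ^ 2 / (2 * σ ^ 2)) (r / σ ^ 2) r := by
    refine ((hasDerivAt_pow 2 r).div_const (2 * σ ^ 2)).congr_deriv ?_
    push_cast
    field_simp
  have hP := (Real.hasDerivAt_rpow_const (p := 1 - (d : ℝ)) (Or.inl hr.ne')).const_mul
    (C * (2 : ℝ) ^ ((d : ℝ) / 2 - 1) * σ ^ d)
  have hprod := hP.mul (HasDerivAt.comp r hI hu)
  have hgfun : g = _ := funext hg
  rw [hg r, hgfun]
  refine hprod.congr_deriv ?_
  have key := radial_prefactor d σ r hσ hr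
  rw [Real.rpow_sub_one hr.ne', Function.comp_apply]
  linear_combination C * Real.exp (-(r ^ 2 / (2 * σ ^ 2))) * key
end
end

section
/- Non-uniqueness of zero-variance dynamics: an explicit planar example (Proposition G.6). On ℝ², define ρ0(x₁,x₂) := (2π)⁻¹ · exp(−(x₁² + x₂²)/2) and ρ1(x₁,x₂) := ρ0(x₁,x₂) + (2π)⁻¹ · x₁ x₂ · exp(−x₁⁴ − x₂⁴). Then: (i) ρ1(x₁,x₂) > 0 for all (x₁,x₂) ∈ ℝ² (indeed (7/16)·ρ0 < ρ1 < (25/16)·ρ0 pointwise); (ii) for every (x₁,x₂) ∈ ℝ², ∫_ℝ ρ1(x₁ + t, x₂) dt = ∫_ℝ ρ0(x₁ + t, x₂) dt; and (iii) for every (x₁,x₂) ∈ ℝ², ∫_ℝ ρ1(x₁, x₂ + t) dt = ∫_ℝ ρ0(x₁, x₂ + t) dt. Hence the two orthogonal constant vector fields e₁ = (1,0) and e₂ = (0,1) are both zero-variance dynamics for the pair (ρ0, ρ1), and neither is a positive scalar multiple of the other. -/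
open MeasureTheory

noncomputable section

/-!
The perturbation `x₁ x₂ exp (-x₁⁴ - x₂⁴)` factors into two copies of `u ↦ u exp (-u⁴)`. Each factor
is dominated by a Gaussian, `|u| exp (-u⁴) < (3/4) exp (-u²/2)` (`abs_mul_exp_lt`), and the product
of the two bounds gives the constant `9/16`, hence `7/16 = 1 - 9/16` and `25/16 = 1 + 9/16`.
Each factor is odd and integrable, so its integral over `ℝ` vanishes; by translation invariance
the perturbation contributes nothing to the integral along either coordinate direction.
-/

/-- Follows from `1 + y ≤ exp y` at `y = u⁴ - u²/2`, together with the positivity of the quartic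
`(3/4) (1 + u⁴ - u²/2) - |u|`. -/
lemma abs_mul_exp_lt (u : ℝ) :
    |u| * Real.exp (-u ^ 4) < 3 / 4 * Real.exp (-(u ^ 2 / 2)) := by
  have h1 : |u| < 3 / 4 * (u ^ 4 - u ^ 2 / 2 + 1) := by
    have e2 : u ^ 2 = |u| ^ 2 := (sq_abs u).symm
    have e4 : u ^ 4 = |u| ^ 4 := by
      rw [show u ^ 4 = (u ^ 2) ^ 2 by ring, e2]; ring
    rw [e2, e4]
    -- The quartic has its minimum near `|u| = 0.81`, where it is about `0.017`.
    nlinarith [sq_nonneg (|u| ^ 2 - 0.66), sq_nonneg (|u| - 0.81)]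
  have h2 := Real.add_one_le_exp (u ^ 4 - u ^ 2 / 2)
  have h3 : Real.exp (-(u ^ 2 / 2)) = Real.exp (u ^ 4 - u ^ 2 / 2) * Real.exp (-u ^ 4) := by
    rw [← Real.exp_add]; congr 1; ring
  rw [h3, ← mul_assoc]
  exact mul_lt_mul_of_pos_right (by linarith) (Real.exp_pos _)

lemma integrable_exp_neg_sq_div_two : Integrable fun u : ℝ => Real.exp (-(u ^ 2 / 2)) := by
  refine (integrable_exp_neg_mul_sq (b := 1 / 2) (by norm_num)).congr (ae_of_all _ fun u => ?_)
  simp only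
  congr 1; ring

lemma integrable_mul_exp_neg_pow_four : Integrable fun u : ℝ => u * Real.exp (-u ^ 4) := by
  refine (integrable_exp_neg_sq_div_two.const_mul (3 / 4)).mono'
    (Continuous.aestronglyMeasurable (by fun_prop)) (ae_of_all _ fun u => ?_)
  rw [Real.norm_eq_abs, abs_mul, Real.abs_exp]
  exact (abs_mul_exp_lt u).le

lemma integral_mul_exp_neg_pow_four : ∫ u : ℝ, u * Real.exp (-u ^ 4) = 0 := by
  have h := integral_neg_eq_self (fun u : ℝ => u * Real.exp (-u ^ 4)) volume
  simp only [even_two_mul 2 |>.neg_pow, show (4 : ℕ) = 2 * 2 from rfl, neg_mul, integral_neg] at h ⊢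
  linarith

/-- The common form of both line integrals: `a` and `c` collect the factors depending on the
coordinate that is held fixed, and `x` is the starting point on the line. -/
lemma integral_line (a c x : ℝ) :
    ∫ t : ℝ, (a * Real.exp (-((x + t) ^ 2 / 2)) + c * ((x + t) * Real.exp (-(x + t) ^ 4))) =
      ∫ t : ℝ, a * Real.exp (-((x + t) ^ 2 / 2)) := by
  rw [integral_add_left_eq_self
      (fun u : ℝ => a * Real.exp (-(u ^ 2 / 2)) + c * (u * Real.exp (-u ^ 4))) x,
    integral_add_left_eq_self (fun u : ℝ => a * Real.exp (-(u ^ 2 / 2))) x,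
    integral_add (integrable_exp_neg_sq_div_two.const_mul a)
      (integrable_mul_exp_neg_pow_four.const_mul c),
    integral_const_mul c, integral_mul_exp_neg_pow_four, mul_zero, add_zero]

/-- Non-uniqueness of zero-variance dynamics: an explicit planar example
(Proposition G.6). Both coordinate directions are zero-variance dynamics for
the pair (ρ0, ρ1). -/
theorem stmt_16 (ρ0 ρ1 : ℝ → ℝ → ℝ)
    (hρ0 : ∀ x₁ x₂ : ℝ, ρ0 x₁ x₂ = (2 * Real.pi)⁻¹ * Real.exp (-((x₁ ^ 2 + x₂ ^ 2) / 2)))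
    (hρ1 : ∀ x₁ x₂ : ℝ, ρ1 x₁ x₂ =
      ρ0 x₁ x₂ + (2 * Real.pi)⁻¹ * (x₁ * x₂) * Real.exp (-x₁ ^ 4 - x₂ ^ 4)) :
    (∀ x₁ x₂ : ℝ,
      0 < ρ1 x₁ x₂ ∧
      (7 / 16) * ρ0 x₁ x₂ < ρ1 x₁ x₂ ∧ ρ1 x₁ x₂ < (25 / 16) * ρ0 x₁ x₂) ∧
    (∀ x₁ x₂ : ℝ, (∫ t : ℝ, ρ1 (x₁ + t) x₂) = ∫ t : ℝ, ρ0 (x₁ + t) x₂) ∧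
    (∀ x₁ x₂ : ℝ, (∫ t : ℝ, ρ1 x₁ (x₂ + t)) = ∫ t : ℝ, ρ0 x₁ (x₂ + t)) := by
  have hπ : (0 : ℝ) < (2 * Real.pi)⁻¹ := by positivity
  have e0 : ∀ x y : ℝ, Real.exp (-((x ^ 2 + y ^ 2) / 2)) =
      Real.exp (-(x ^ 2 / 2)) * Real.exp (-(y ^ 2 / 2)) := fun x y => by
    rw [← Real.exp_add]; congr 1; ring
  have e1 : ∀ x y : ℝ, Real.exp (-x ^ 4 - y ^ 4) = Real.exp (-x ^ 4) * Real.exp (-y ^ 4) :=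
    fun x y => by rw [← Real.exp_add]; congr 1
  refine ⟨fun x y => ?_, fun x y => ?_, fun x y => ?_⟩
  · have hpos : 0 < ρ0 x y := by rw [hρ0]; positivity
    have hb : |(2 * Real.pi)⁻¹ * (x * y) * Real.exp (-x ^ 4 - y ^ 4)| < 9 / 16 * ρ0 x y := by
      have h := mul_lt_mul'' (abs_mul_exp_lt x) (abs_mul_exp_lt y) (by positivity) (by positivity)
      rw [hρ0, e0, e1, abs_mul, abs_mul, abs_mul, abs_mul, Real.abs_exp, Real.abs_exp,
        abs_of_pos hπ]
      have h' := mul_lt_mul_of_pos_left h hπ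
      linarith
    obtain ⟨h1, h2⟩ := abs_lt.mp hb
    rw [hρ1]
    refine ⟨?_, ?_, ?_⟩ <;> linarith
  · convert integral_line ((2 * Real.pi)⁻¹ * Real.exp (-(y ^ 2 / 2)))
      ((2 * Real.pi)⁻¹ * (y * Real.exp (-y ^ 4))) x using 3 with t t
    · rw [hρ1, hρ0, e0, e1]; ring
    · rw [hρ0, e0]; ring
  · convert integral_line ((2 * Real.pi)⁻¹ * Real.exp (-(x ^ 2 / 2)))
      ((2 * Real.pi)⁻¹ * (x * Real.exp (-x ^ 4))) y using 3 with t t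
    · rw [hρ1, hρ0, e0, e1]; ring
    · rw [hρ0, e0]; ring
end
end

section
/- Orthogonal flows reproduce the vanilla estimator (equality case of Proposition H.1, converse direction). Let b be an admissible vector field with global flow X and Jacobian factor J, and let U0, U1 : ℝ^d → ℝ be continuously differentiable. Assume the orthogonality condition ⟨b(y), ∇(U1 − U0)(y)⟩ = 0 for all y ∈ ℝ^d. Then: (i) for every x ∈ ℝ^d and every t ∈ ℝ, (U1 − U0)(X t x) = (U1 − U0)(x); and (ii) for every x ∈ ℝ^d such that ∫_ℝ F^0_t(x) dt is finite and strictly positive, the infinite-time NEIS estimator satisfies A(x) = exp(−(U1(x) − U0(x))). -/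
/-!
By the chain rule, the derivative of `U1 - U0` along a flow line is
`⟨b, ∇(U1 - U0)⟩ = 0`, so `U1 - U0` is constant on orbits. Hence the integrand of the
numerator is `exp (-(U1 x - U0 x))` times that of the denominator, for every time `t`, and
the constant factor comes out of the integral.
-/

open MeasureTheory Filter

noncomputable section

/-- Orthogonal flows reproduce the vanilla estimator
(equality case of Proposition H.1, converse direction). -/
theorem stmt_19 {d : ℕ} (hd : 0 < d)
    (b : Euc d → Euc d) (hb : Admissible b)
    (X : ℝ → Euc d → Euc d) (hX : IsGlobalFlow b X)
    (U0 U1 : Euc d → ℝ) (hU0 : ContDiff ℝ 1 U0) (hU1 : ContDiff ℝ 1 U1)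
    (horth : ∀ y : Euc d,
      @inner ℝ _ _ (b y) (gradient (fun z => U1 z - U0 z) y) = (0 : ℝ)) :
    (∀ (x : Euc d) (t : ℝ), U1 (X t x) - U0 (X t x) = U1 x - U0 x) ∧
    ∀ x : Euc d,
      Integrable (fun t : ℝ => Real.exp (-(U0 (X t x))) * Jac b X t x) →
      0 < (∫ t : ℝ, Real.exp (-(U0 (X t x))) * Jac b X t x) →
      (∫ t : ℝ, Real.exp (-(U1 (X t x))) * Jac b X t x) /
          (∫ t : ℝ, Real.exp (-(U0 (X t x))) * Jac b X t x) =
        Real.exp (-(U1 x - U0 x)) := by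
  have hU : Differentiable ℝ (fun z => U1 z - U0 z) :=
    (hU1.differentiable one_ne_zero).sub (hU0.differentiable one_ne_zero)
  have hconst : ∀ (x : Euc d) (t : ℝ), U1 (X t x) - U0 (X t x) = U1 x - U0 x := by
    intro x t
    have hder : ∀ τ : ℝ, HasDerivAt (fun σ => U1 (X σ x) - U0 (X σ x)) 0 τ := by
      intro τ
      have h := (hU (X τ x)).hasGradientAt.hasFDerivAt.comp_hasDerivAt τ (hX.2.2 x τ)
      rw [InnerProductSpace.toDual_apply_apply, real_inner_comm, horth] at h
      exact h
    have h := is_const_of_deriv_eq_zero (fun τ => (hder τ).differentiableAt)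
      (fun τ => (hder τ).deriv) t 0
    simpa only [hX.1] using h
  refine ⟨hconst, fun x _ hpos => ?_⟩
  have hF : ∀ t : ℝ, Real.exp (-(U1 (X t x))) * Jac b X t x =
      Real.exp (-(U1 x - U0 x)) * (Real.exp (-(U0 (X t x))) * Jac b X t x) := by
    intro t
    rw [← hconst x t, ← mul_assoc, ← Real.exp_add]
    congr 2
    ring
  simp_rw [hF]
  rw [integral_const_mul, mul_div_assoc, div_self hpos.ne', mul_one]
end
end
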